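/- Let q ≥ 2 be an integer, 0 < H < 1 − 1/(2q), and let c_{1,q,H} > 0 be the constant for which V_n/(c_{1,q,H} √n) converges in law to N(0,1). Then ε² · Σ_{n≥1} P(|V_n| > ε n) converges to c_{1,q,H}² as ε → 0⁺ (Hsu–Robbins theorem for the variations of fractional Brownian motion, central-limit regime). -/

import Mathlib

open MeasureTheory ProbabilityTheory Filter Real Topology

/-- A (centered) fractional Brownian motion with Hurst parameter `H`:
all finite-dimensional distributions are centered Gaussian (equivalently, every finite
linear combination of values of the process is a centered real Gaussian), with covariance
`E (B s * B t) = (s^(2H) + t^(2H) - |t-s|^(2H)) / 2` for nonnegative times. -/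
structure IsFractionalBrownianMotion {Ω : Type*} [MeasureSpace Ω]
    (B : ℝ → Ω → ℝ) (H : ℝ) : Prop where
  measurable : ∀ t : ℝ, Measurable (B t)
  gaussian_fdd : ∀ (n : ℕ) (t : Fin n → ℝ), (∀ i, 0 ≤ t i) → ∀ c : Fin n → ℝ,
    ∃ v : NNReal,
      Measure.map (fun ω => ∑ i, c i * B (t i) ω) (ℙ : Measure Ω) = gaussianReal 0 v
  covariance : ∀ s t : ℝ, 0 ≤ s → 0 ≤ t →
    ∫ ω, B s ω * B t ω ∂(ℙ : Measure Ω)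
      = (s ^ (2 * H) + t ^ (2 * H) - |t - s| ^ (2 * H)) / 2

/-- `V_n = ∑_{k=0}^{n-1} H_q (n^H (B_{(k+1)/n} - B_{k/n}))`, where `H_q` is the Hermite
polynomial of degree `q`. -/
noncomputable def hermiteVariation {Ω : Type*} [MeasureSpace Ω]
    (B : ℝ → Ω → ℝ) (H : ℝ) (q n : ℕ) (ω : Ω) : ℝ :=
  ∑ k ∈ Finset.range n,
    Polynomial.aeval
      ((n : ℝ) ^ H * (B (((k : ℝ) + 1) / n) ω - B ((k : ℝ) / n) ω))
      (Polynomial.hermite q)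

/-- Convergence in distribution of a sequence of real random variables to a law `μ`. -/
def TendstoInDistribution {Ω : Type*} [MeasureSpace Ω]
    (Z : ℕ → Ω → ℝ) (μ : Measure ℝ) : Prop :=
  ∀ f : BoundedContinuousFunction ℝ ℝ,
    Tendsto (fun n => ∫ ω, f (Z n ω) ∂(ℙ : Measure Ω)) atTop (𝓝 (∫ x, f x ∂μ))


lemma gauss_integrable_pow (m : ℕ) : Integrable (fun x : ℝ => x ^ m) (gaussianReal 0 1) := by
  have h := (memLp_id_gaussianReal (μ := 0) (v := 1) (m : NNReal))
  have := h.integrable_norm_pow' 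
  refine (integrable_norm_iff (by fun_prop)).1 ?_
  simpa using this

lemma gauss_pow_ibp (m : ℕ) : ∫ x : ℝ, x ^ (m + 1) ∂(gaussianReal 0 1)
    = m * ∫ x : ℝ, x ^ (m - 1) ∂(gaussianReal 0 1) := by
  have hIntg : ∀ k : ℕ, Integrable (fun x : ℝ => gaussianPDFReal 0 1 x * x ^ k) := by
    intro k
    have h := gauss_integrable_pow k
    rw [gaussianReal_of_var_ne_zero _ one_ne_zero,
      integrable_withDensity_iff_integrable_smul' (measurable_gaussianPDF _ _)
      (ae_of_all _ fun _ ↦ gaussianPDF_lt_top)] at h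
    simpa [toReal_gaussianPDF] using h
  have hd : ∀ x : ℝ, HasDerivAt (gaussianPDFReal 0 1) (-(x * gaussianPDFReal 0 1 x)) x := by
    intro x
    have h1 : HasDerivAt (fun x : ℝ => (√(2 * π * (1:NNReal)))⁻¹ * rexp (-(x - 0) ^ 2 / (2 * (1:NNReal))))
      ((√(2 * π * (1:NNReal)))⁻¹ * (rexp (-(x - 0) ^ 2 / (2 * (1:NNReal))) * (-(2 * (x - 0) ^ 1 * 1) / (2 * (1:NNReal))))) x := by
      refine HasDerivAt.const_mul _ (HasDerivAt.exp ?_)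
      refine HasDerivAt.div_const ?_ _
      exact (((hasDerivAt_id x).sub_const 0).pow 2).neg
    have h2 : gaussianPDFReal 0 1 = (fun x : ℝ => (√(2 * π * (1:NNReal)))⁻¹ * rexp (-(x - 0) ^ 2 / (2 * (1:NNReal)))) := rfl
    rw [h2]
    convert h1 using 1
    simp
    ring
  have key := integral_eq_zero_of_hasDerivAt_of_integrable
    (f := fun x => gaussianPDFReal 0 1 x * x ^ m)
    (f' := fun x => m * (gaussianPDFReal 0 1 x * x ^ (m - 1)) - gaussianPDFReal 0 1 x * x ^ (m + 1))
    (fun x => by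
      refine HasDerivAt.congr_deriv ((hd x).mul (hasDerivAt_pow m x)) ?_
      ring) (((hIntg _).const_mul _).sub (hIntg _)) (hIntg m)
  rw [integral_sub ((hIntg _).const_mul _) (hIntg _), integral_const_mul] at key
  rw [integral_gaussianReal_eq_integral_smul one_ne_zero,
    integral_gaussianReal_eq_integral_smul one_ne_zero]
  simp only [smul_eq_mul]
  linarith

/-- standard Gaussian on `ℝ^4`. -/
noncomputable def stdG : Measure (Fin 4 → ℝ) := Measure.pi (fun _ => gaussianReal 0 1)

instance : IsProbabilityMeasure stdG := by unfold stdG; infer_instance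

lemma stdG_integrable (p : MvPolynomial (Fin 4) ℝ) :
    Integrable (fun z => MvPolynomial.eval z p) stdG := by
  induction p using MvPolynomial.induction_on' with
  | monomial m a =>
    simp only [MvPolynomial.eval_monomial]
    refine Integrable.const_mul ?_ _
    have : (fun z : Fin 4 → ℝ => m.prod fun n e => z n ^ e) = fun z => ∏ i, z i ^ m i := by
      ext z; rw [Finsupp.prod_fintype]; simp
    rw [this]
    exact Integrable.fintype_prod (f := fun i (x : ℝ) => x ^ m i) fun i => gauss_integrable_pow (m i)
  | add p q hp hq => exact (hp.add hq).congr (ae_of_all _ fun z => by simp)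

lemma stdG_ibp (k : Fin 4) (p : MvPolynomial (Fin 4) ℝ) :
    ∫ z, z k * MvPolynomial.eval z p ∂stdG = ∫ z, MvPolynomial.eval z (MvPolynomial.pderiv k p) ∂stdG := by
  induction p using MvPolynomial.induction_on' with
  | monomial m a =>
    rw [MvPolynomial.pderiv_monomial]
    simp only [MvPolynomial.eval_monomial]
    have h1 : ∀ z : Fin 4 → ℝ, z k * (a * m.prod fun n e => z n ^ e)
      = a * ∏ i, z i ^ ((m + Finsupp.single k 1 : Fin 4 →₀ ℕ) i) := by
      intro z
      rw [Finsupp.prod_fintype _ _ (by simp)]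
      simp only [Finsupp.add_apply, pow_add, Finset.prod_mul_distrib]
      have : ∏ x, z x ^ (Finsupp.single k 1 x) = z k := by
        rw [Finset.prod_eq_single k]
        · simp
        · intro b _ hb; simp [hb.symm]
        · simp
      rw [this]; ring
    have h2 : ∀ z : Fin 4 → ℝ, (a * (m k) * (m - Finsupp.single k 1).prod fun n e => z n ^ e)
      = a * (m k) * ∏ i, z i ^ ((m - Finsupp.single k 1 : Fin 4 →₀ ℕ) i) := by
      intro z
      rw [Finsupp.prod_fintype _ _ (by simp)]
    simp_rw [h1, h2, integral_const_mul]
    unfold stdG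
    rw [integral_fintype_prod_eq_prod (fun i (x : ℝ) => x ^ ((m + Finsupp.single k 1 : Fin 4 →₀ ℕ) i)),
      integral_fintype_prod_eq_prod (fun i (x : ℝ) => x ^ ((m - Finsupp.single k 1 : Fin 4 →₀ ℕ) i)),
      ← Finset.mul_prod_erase _ _ (Finset.mem_univ k), ← Finset.mul_prod_erase _ (fun i => ∫ x : ℝ, x ^ ((m - Finsupp.single k 1 : Fin 4 →₀ ℕ) i) ∂gaussianReal 0 1) (Finset.mem_univ k)]
    have h3 : ∀ i ∈ Finset.univ.erase k, ∫ x : ℝ, x ^ ((m + Finsupp.single k 1 : Fin 4 →₀ ℕ) i) ∂gaussianReal 0 1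
       = ∫ x : ℝ, x ^ ((m - Finsupp.single k 1 : Fin 4 →₀ ℕ) i) ∂gaussianReal 0 1 := by
      intro i hi
      have : i ≠ k := Finset.ne_of_mem_erase hi
      simp [this.symm]
    rw [Finset.prod_congr rfl h3]
    simp only [Finsupp.add_apply, Finsupp.tsub_apply, Finsupp.single_eq_same, gauss_pow_ibp]
    ring
  | add p q hp hq =>
    have hi : ∀ p : MvPolynomial (Fin 4) ℝ, Integrable (fun z => z k * MvPolynomial.eval z p) stdG := by
      intro p
      exact (stdG_integrable (MvPolynomial.X k * p)).congr (ae_of_all _ fun z => by simp)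
    simp only [map_add, mul_add]
    rw [integral_add (hi p) (hi q), integral_add (stdG_integrable _) (stdG_integrable _), hp, hq]

/-- substitution of a linear map -/
noncomputable def linSub (A : Matrix (Fin 4) (Fin 4) ℝ) :
    MvPolynomial (Fin 4) ℝ →ₐ[ℝ] MvPolynomial (Fin 4) ℝ :=
  MvPolynomial.aeval (fun i => ∑ k, MvPolynomial.C (A i k) * MvPolynomial.X k)

lemma eval_linSub (A : Matrix (Fin 4) (Fin 4) ℝ) (p : MvPolynomial (Fin 4) ℝ) (z : Fin 4 → ℝ) :
    MvPolynomial.eval z (linSub A p) = MvPolynomial.eval (A.mulVec z) p := by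
  induction p using MvPolynomial.induction_on with
  | C a => simp [linSub]
  | add p q hp hq => simp [hp, hq]
  | mul_X p i hp => 
    rw [map_mul, map_mul, map_mul, hp]
    simp [linSub, Matrix.mulVec, dotProduct]

lemma pderiv_linSub (A : Matrix (Fin 4) (Fin 4) ℝ) (p : MvPolynomial (Fin 4) ℝ) (k : Fin 4) :
    MvPolynomial.pderiv k (linSub A p) =
      ∑ j, MvPolynomial.C (A j k) * linSub A (MvPolynomial.pderiv j p) := by
  induction p using MvPolynomial.induction_on with
  | C a => simp [linSub]
  | add p q hp hq => simp [hp, hq, mul_add, Finset.sum_add_distrib]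
  | mul_X p i hp => 
    have h1 : MvPolynomial.pderiv k (linSub A (MvPolynomial.X i)) = MvPolynomial.C (A i k) := by
      simp only [linSub, MvPolynomial.aeval_X, map_sum, Derivation.leibniz, MvPolynomial.pderiv_C, MvPolynomial.pderiv_X]
      simp [Pi.single_apply]
    rw [map_mul, Derivation.leibniz, h1, hp]
    simp only [Derivation.leibniz, MvPolynomial.pderiv_X, smul_eq_mul, map_add, map_mul, mul_add, Finset.sum_add_distrib, Finset.mul_sum]
    congr 1
    · rw [Finset.sum_eq_single i]
      · simp; ring
      · intro b _ hb; simp [hb.symm]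
      · simp
    · refine Finset.sum_congr rfl fun j _ => ?_
      ring

lemma linG_ibp (A : Matrix (Fin 4) (Fin 4) ℝ) (i : Fin 4) (p : MvPolynomial (Fin 4) ℝ) :
    ∫ z, MvPolynomial.eval (A.mulVec z) (MvPolynomial.X i * p) ∂stdG
      = ∑ j, (A * A.transpose) i j * ∫ z, MvPolynomial.eval (A.mulVec z) (MvPolynomial.pderiv j p) ∂stdG := by
  have hi : ∀ (k : Fin 4) (p : MvPolynomial (Fin 4) ℝ), Integrable (fun z => z k * MvPolynomial.eval z p) stdG := by
    intro k p
    exact (stdG_integrable (MvPolynomial.X k * p)).congr (ae_of_all _ fun z => by simp)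
  have h1 : ∀ z : Fin 4 → ℝ, MvPolynomial.eval (A.mulVec z) (MvPolynomial.X i * p)
      = ∑ k, A i k * (z k * MvPolynomial.eval z (linSub A p)) := by
    intro z
    rw [map_mul, MvPolynomial.eval_X, eval_linSub]
    simp [Matrix.mulVec, dotProduct, Finset.sum_mul, mul_assoc]
  simp_rw [h1]
  rw [integral_finsetSum _ (fun k _ => (hi k _).const_mul _)]
  simp_rw [integral_const_mul, stdG_ibp, pderiv_linSub, map_sum, map_mul, MvPolynomial.eval_C]
  have h2 : ∀ x : Fin 4, ∫ a, ∑ j, A j x * MvPolynomial.eval a (linSub A (MvPolynomial.pderiv j p)) ∂stdG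
     = ∑ j, A j x * ∫ a, MvPolynomial.eval (A.mulVec a) (MvPolynomial.pderiv j p) ∂stdG := by
    intro x
    rw [integral_finsetSum _ (fun k _ => (stdG_integrable _).const_mul _)]
    simp_rw [integral_const_mul, eval_linSub]
  simp_rw [h2, Matrix.mul_apply, Matrix.transpose_apply, Finset.mul_sum, Finset.sum_mul]
  rw [Finset.sum_comm]
  simp only [mul_assoc]

noncomputable def hr (n : ℕ) : Polynomial ℝ := (Polynomial.hermite n).map (Int.castRingHom ℝ)

lemma hr_succ (n : ℕ) : hr (n + 1) = Polynomial.X * hr n - Polynomial.derivative (hr n) := by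
  simp [hr, Polynomial.hermite_succ, Polynomial.derivative_map]

lemma hr_zero : hr 0 = 1 := by simp [hr]

lemma hr_deriv (n : ℕ) : Polynomial.derivative (hr n) = (n : Polynomial ℝ) * hr (n - 1) := by
  induction n with
  | zero => simp [hr_zero]
  | succ n ih =>
    rw [hr_succ, Polynomial.derivative_sub, Polynomial.derivative_mul, Polynomial.derivative_X]
    cases n with
    | zero => simp [hr_zero]
    | succ m =>
      rw [ih, Polynomial.derivative_mul]
      simp only [Nat.add_sub_cancel, Polynomial.derivative_natCast]
      rw [hr_succ m]
      push_cast
      ring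

noncomputable def hm (i : Fin 4) (n : ℕ) : MvPolynomial (Fin 4) ℝ :=
  Polynomial.aeval (MvPolynomial.X i) (hr n)

lemma hm_zero (i : Fin 4) : hm i 0 = 1 := by simp [hm, hr_zero]

lemma hm_pderiv (i j : Fin 4) (n : ℕ) :
    MvPolynomial.pderiv j (hm i n) = if i = j then (n : MvPolynomial (Fin 4) ℝ) * hm i (n - 1) else 0 := by
  rw [hm, Derivation.map_aeval, hr_deriv]
  by_cases h : i = j
  · subst h; simp [hm]
  · simp [h, MvPolynomial.pderiv_X_of_ne h]

lemma hm_succ (i : Fin 4) (n : ℕ) :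
    hm i (n + 1) = MvPolynomial.X i * hm i n - (n : MvPolynomial (Fin 4) ℝ) * hm i (n - 1) := by
  simp [hm, hr_succ, hr_deriv]

noncomputable def EH (A : Matrix (Fin 4) (Fin 4) ℝ) (a b c d : ℕ) : ℝ :=
  ∫ z, MvPolynomial.eval (A.mulVec z) (hm 0 a * hm 1 b * hm 2 c * hm 3 d) ∂stdG

lemma linG_integrable (A : Matrix (Fin 4) (Fin 4) ℝ) (p : MvPolynomial (Fin 4) ℝ) :
    Integrable (fun z => MvPolynomial.eval (A.mulVec z) p) stdG :=
  (stdG_integrable (linSub A p)).congr (ae_of_all _ fun z => by simp [eval_linSub])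

/-- expectation as a linear functional -/
noncomputable def LG (A : Matrix (Fin 4) (Fin 4) ℝ) : MvPolynomial (Fin 4) ℝ →ₗ[ℝ] ℝ where
  toFun p := ∫ z, MvPolynomial.eval (A.mulVec z) p ∂stdG
  map_add' p q := by
    simp only [map_add]
    exact integral_add (linG_integrable A p) (linG_integrable A q)
  map_smul' r p := by
    simp only [MvPolynomial.smul_eval, integral_const_mul]
    rfl

lemma LG_ibp (A : Matrix (Fin 4) (Fin 4) ℝ) (i : Fin 4) (p : MvPolynomial (Fin 4) ℝ) :
    LG A (MvPolynomial.X i * p)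
      = ∑ j, (A * A.transpose) i j * LG A (MvPolynomial.pderiv j p) := linG_ibp A i p

lemma LG_nat (A : Matrix (Fin 4) (Fin 4) ℝ) (n : ℕ) (p : MvPolynomial (Fin 4) ℝ) :
    LG A ((n : MvPolynomial (Fin 4) ℝ) * p) = n * LG A p := by
  rw [← nsmul_eq_mul, map_nsmul, nsmul_eq_mul]

lemma EH_r0 (A : Matrix (Fin 4) (Fin 4) ℝ) (h : (A * A.transpose) 0 0 = 1) (a b c d : ℕ) :
    EH A (a + 1) b c d = b * (A * A.transpose) 0 1 * EH A a (b - 1) c d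
      + c * (A * A.transpose) 0 2 * EH A a b (c - 1) d
      + d * (A * A.transpose) 0 3 * EH A a b c (d - 1) := by
  change LG A _ = b * (A * A.transpose) 0 1 * LG A _ + c * (A * A.transpose) 0 2 * LG A _ +
    d * (A * A.transpose) 0 3 * LG A _
  have e : hm 0 (a + 1) * hm 1 b * hm 2 c * hm 3 d = MvPolynomial.X 0 * (hm 0 a * hm 1 b * hm 2 c * hm 3 d)
    - (a : MvPolynomial (Fin 4) ℝ) * (hm 0 (a - 1) * hm 1 b * hm 2 c * hm 3 d) := by
    rw [hm_succ]; ring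
  have d0 : MvPolynomial.pderiv 0 (hm 0 a * hm 1 b * hm 2 c * hm 3 d) =
    (a : MvPolynomial (Fin 4) ℝ) * (hm 0 (a - 1) * hm 1 b * hm 2 c * hm 3 d) := by
    simp [Derivation.leibniz, hm_pderiv]; ring
  have d1 : MvPolynomial.pderiv 1 (hm 0 a * hm 1 b * hm 2 c * hm 3 d) =
    (b : MvPolynomial (Fin 4) ℝ) * (hm 0 a * hm 1 (b - 1) * hm 2 c * hm 3 d) := by
    simp [Derivation.leibniz, hm_pderiv]; ring
  have d2 : MvPolynomial.pderiv 2 (hm 0 a * hm 1 b * hm 2 c * hm 3 d) =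
    (c : MvPolynomial (Fin 4) ℝ) * (hm 0 a * hm 1 b * hm 2 (c - 1) * hm 3 d) := by
    simp [Derivation.leibniz, hm_pderiv]; ring
  have d3 : MvPolynomial.pderiv 3 (hm 0 a * hm 1 b * hm 2 c * hm 3 d) =
    (d : MvPolynomial (Fin 4) ℝ) * (hm 0 a * hm 1 b * hm 2 c * hm 3 (d - 1)) := by
    simp [Derivation.leibniz, hm_pderiv]; ring
  rw [e, map_sub, LG_ibp, Fin.sum_univ_four, d0, d1, d2, d3, h]
  simp only [LG_nat]
  ring

lemma EH_r1 (A : Matrix (Fin 4) (Fin 4) ℝ) (h : (A * A.transpose) 1 1 = 1) (b c d : ℕ) :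
    EH A 0 (b + 1) c d = c * (A * A.transpose) 1 2 * EH A 0 b (c - 1) d
      + d * (A * A.transpose) 1 3 * EH A 0 b c (d - 1) := by
  change LG A _ = c * (A * A.transpose) 1 2 * LG A _ +
    d * (A * A.transpose) 1 3 * LG A _
  have e : hm 0 0 * hm 1 (b + 1) * hm 2 c * hm 3 d = MvPolynomial.X 1 * (hm 0 0 * hm 1 b * hm 2 c * hm 3 d)
    - (b : MvPolynomial (Fin 4) ℝ) * (hm 0 0 * hm 1 (b - 1) * hm 2 c * hm 3 d) := by
    rw [hm_succ]; ring
  have d0 : MvPolynomial.pderiv 0 (hm 0 0 * hm 1 b * hm 2 c * hm 3 d) = 0 := by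
    simp [Derivation.leibniz, hm_pderiv]
  have d1 : MvPolynomial.pderiv 1 (hm 0 0 * hm 1 b * hm 2 c * hm 3 d) =
    (b : MvPolynomial (Fin 4) ℝ) * (hm 0 0 * hm 1 (b - 1) * hm 2 c * hm 3 d) := by
    simp [Derivation.leibniz, hm_pderiv]; ring
  have d2 : MvPolynomial.pderiv 2 (hm 0 0 * hm 1 b * hm 2 c * hm 3 d) =
    (c : MvPolynomial (Fin 4) ℝ) * (hm 0 0 * hm 1 b * hm 2 (c - 1) * hm 3 d) := by
    simp [Derivation.leibniz, hm_pderiv]; ring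
  have d3 : MvPolynomial.pderiv 3 (hm 0 0 * hm 1 b * hm 2 c * hm 3 d) =
    (d : MvPolynomial (Fin 4) ℝ) * (hm 0 0 * hm 1 b * hm 2 c * hm 3 (d - 1)) := by
    simp [Derivation.leibniz, hm_pderiv]; ring
  rw [e, map_sub, LG_ibp, Fin.sum_univ_four, d0, d1, d2, d3, h]
  simp only [LG_nat, map_zero]
  ring

lemma EH_r2 (A : Matrix (Fin 4) (Fin 4) ℝ) (h : (A * A.transpose) 2 2 = 1) (c d : ℕ) :
    EH A 0 0 (c + 1) d = d * (A * A.transpose) 2 3 * EH A 0 0 c (d - 1) := by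
  change LG A _ = d * (A * A.transpose) 2 3 * LG A _
  have e : hm 0 0 * hm 1 0 * hm 2 (c + 1) * hm 3 d = MvPolynomial.X 2 * (hm 0 0 * hm 1 0 * hm 2 c * hm 3 d)
    - (c : MvPolynomial (Fin 4) ℝ) * (hm 0 0 * hm 1 0 * hm 2 (c - 1) * hm 3 d) := by
    rw [hm_succ]; ring
  have d0 : MvPolynomial.pderiv 0 (hm 0 0 * hm 1 0 * hm 2 c * hm 3 d) = 0 := by
    simp [Derivation.leibniz, hm_pderiv]
  have d1 : MvPolynomial.pderiv 1 (hm 0 0 * hm 1 0 * hm 2 c * hm 3 d) = 0 := by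
    simp [Derivation.leibniz, hm_pderiv]
  have d2 : MvPolynomial.pderiv 2 (hm 0 0 * hm 1 0 * hm 2 c * hm 3 d) =
    (c : MvPolynomial (Fin 4) ℝ) * (hm 0 0 * hm 1 0 * hm 2 (c - 1) * hm 3 d) := by
    simp [Derivation.leibniz, hm_pderiv]; ring
  have d3 : MvPolynomial.pderiv 3 (hm 0 0 * hm 1 0 * hm 2 c * hm 3 d) =
    (d : MvPolynomial (Fin 4) ℝ) * (hm 0 0 * hm 1 0 * hm 2 c * hm 3 (d - 1)) := by
    simp [Derivation.leibniz, hm_pderiv]; ring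
  rw [e, map_sub, LG_ibp, Fin.sum_univ_four, d0, d1, d2, d3, h]
  simp only [LG_nat, map_zero]
  ring

lemma EH_r3 (A : Matrix (Fin 4) (Fin 4) ℝ) (h : (A * A.transpose) 3 3 = 1) (d : ℕ) :
    EH A 0 0 0 (d + 1) = 0 := by
  change LG A _ = 0
  have e : hm 0 0 * hm 1 0 * hm 2 0 * hm 3 (d + 1) = MvPolynomial.X 3 * (hm 0 0 * hm 1 0 * hm 2 0 * hm 3 d)
    - (d : MvPolynomial (Fin 4) ℝ) * (hm 0 0 * hm 1 0 * hm 2 0 * hm 3 (d - 1)) := by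
    rw [hm_succ]; ring
  have d0 : MvPolynomial.pderiv 0 (hm 0 0 * hm 1 0 * hm 2 0 * hm 3 d) = 0 := by
    simp [Derivation.leibniz, hm_pderiv]
  have d1 : MvPolynomial.pderiv 1 (hm 0 0 * hm 1 0 * hm 2 0 * hm 3 d) = 0 := by
    simp [Derivation.leibniz, hm_pderiv]
  have d2 : MvPolynomial.pderiv 2 (hm 0 0 * hm 1 0 * hm 2 0 * hm 3 d) = 0 := by
    simp [Derivation.leibniz, hm_pderiv]
  have d3 : MvPolynomial.pderiv 3 (hm 0 0 * hm 1 0 * hm 2 0 * hm 3 d) =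
    (d : MvPolynomial (Fin 4) ℝ) * (hm 0 0 * hm 1 0 * hm 2 0 * hm 3 (d - 1)) := by
    simp [Derivation.leibniz, hm_pderiv]; ring
  rw [e, map_sub, LG_ibp, Fin.sum_univ_four, d0, d1, d2, d3, h]
  simp only [LG_nat, map_zero]
  ring

lemma EH_zero (A : Matrix (Fin 4) (Fin 4) ℝ) : EH A 0 0 0 0 = 1 := by
  simp [EH, hm_zero]

lemma EH_bound (A : Matrix (Fin 4) (Fin 4) ℝ) (h : ∀ i, (A * A.transpose) i i = 1) :
    ∀ (N a b c d : ℕ), a + b + c + d ≤ N → ∀ w T : ℝ, 0 ≤ w → 0 ≤ T →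
    (∀ i j k l m n : ℕ, a = i + j + k → b = i + l + m → c = j + l + n → d = k + m + n →
      w * (|(A * A.transpose) 0 1| ^ i * |(A * A.transpose) 0 2| ^ j * |(A * A.transpose) 0 3| ^ k *
        |(A * A.transpose) 1 2| ^ l * |(A * A.transpose) 1 3| ^ m * |(A * A.transpose) 2 3| ^ n) ≤ T) →
    w * |EH A a b c d| ≤ (N.factorial : ℝ) * T := by
  set S := A * A.transpose with hS
  intro N
  induction N with
  | zero =>
    intro a b c d hN w T hw hT hyp
    obtain ⟨rfl, rfl, rfl, rfl⟩ : a = 0 ∧ b = 0 ∧ c = 0 ∧ d = 0 := by omega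
    have := hyp 0 0 0 0 0 0 rfl rfl rfl rfl
    simpa [EH_zero] using this
  | succ N ih =>
    intro a b c d hN w T hw hT hyp
    have hfac : ((N + 1).factorial : ℝ) * T = (N + 1) * (N.factorial * T) := by
      rw [Nat.factorial_succ]; push_cast; ring
    have hNT : 0 ≤ (N.factorial : ℝ) * T := by positivity
    -- one elementary step
    have step : ∀ (x : ℝ) (e : ℕ) (y : ℝ), (1 ≤ e → w * |x| * |y| ≤ N.factorial * T) →
        w * |e * x * y| ≤ e * (N.factorial * T) := by
      intro x e y hy
      rcases Nat.eq_zero_or_pos e with rfl | he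
      · simp
      · have := mul_le_mul_of_nonneg_left (hy he) (Nat.cast_nonneg (α := ℝ) e)
        rw [abs_mul, abs_mul, Nat.abs_cast]
        linarith
    rcases a with _ | a
    · rcases b with _ | b
      · rcases c with _ | c
        · rcases d with _ | d
          · have h0 := ih 0 0 0 0 (by omega) w T hw hT hyp
            rw [hfac]
            nlinarith [Nat.cast_nonneg (α := ℝ) N]
          · rw [EH_r3 A (h 3)]
            simp only [abs_zero, mul_zero]; positivity
        · rw [EH_r2 A (h 2), ← hS]
          have s3 := step (S 2 3) d (EH A 0 0 c (d - 1)) (fun hd => by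
            refine ih 0 0 c (d - 1) (by omega) _ T (by positivity) hT ?_
            intro i j k l m n h1 h2 h3 h4
            have := hyp i j k l m (n + 1) (by omega) (by omega) (by omega) (by omega)
            refine le_trans (le_of_eq ?_) this
            ring)
          have hd : (d : ℝ) ≤ N + 1 := by exact_mod_cast (by omega : d ≤ N + 1)
          rw [hfac]
          nlinarith
      · rw [EH_r1 A (h 1), ← hS]
        have s2 := step (S 1 2) c (EH A 0 b (c - 1) d) (fun hd => by
            refine ih 0 b (c - 1) d (by omega) _ T (by positivity) hT ?_
            intro i j k l m n h1 h2 h3 h4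
            have := hyp i j k (l + 1) m n (by omega) (by omega) (by omega) (by omega)
            refine le_trans (le_of_eq ?_) this
            ring)
        have s3 := step (S 1 3) d (EH A 0 b c (d - 1)) (fun hd => by
            refine ih 0 b c (d - 1) (by omega) _ T (by positivity) hT ?_
            intro i j k l m n h1 h2 h3 h4
            have := hyp i j k l (m + 1) n (by omega) (by omega) (by omega) (by omega)
            refine le_trans (le_of_eq ?_) this
            ring)
        have hd : (c : ℝ) + d ≤ N + 1 := by exact_mod_cast (by omega : c + d ≤ N + 1)
        have ht := mul_le_mul_of_nonneg_left (abs_add_le (c * S 1 2 * EH A 0 b (c - 1) d) (d * S 1 3 * EH A 0 b c (d - 1))) hw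
        rw [hfac]
        nlinarith
    · rw [EH_r0 A (h 0), ← hS]
      have s1 := step (S 0 1) b (EH A a (b - 1) c d) (fun hd => by
            refine ih a (b - 1) c d (by omega) _ T (by positivity) hT ?_
            intro i j k l m n h1 h2 h3 h4
            have := hyp (i + 1) j k l m n (by omega) (by omega) (by omega) (by omega)
            refine le_trans (le_of_eq ?_) this
            ring)
      have s2 := step (S 0 2) c (EH A a b (c - 1) d) (fun hd => by
            refine ih a b (c - 1) d (by omega) _ T (by positivity) hT ?_
            intro i j k l m n h1 h2 h3 h4
            have := hyp i (j + 1) k l m n (by omega) (by omega) (by omega) (by omega)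
            refine le_trans (le_of_eq ?_) this
            ring)
      have s3 := step (S 0 3) d (EH A a b c (d - 1)) (fun hd => by
            refine ih a b c (d - 1) (by omega) _ T (by positivity) hT ?_
            intro i j k l m n h1 h2 h3 h4
            have := hyp i j (k + 1) l m n (by omega) (by omega) (by omega) (by omega)
            refine le_trans (le_of_eq ?_) this
            ring)
      have hd : (b : ℝ) + c + d ≤ N + 1 := by exact_mod_cast (by omega : b + c + d ≤ N + 1)
      have ht := mul_le_mul_of_nonneg_left (abs_add_three (b * S 0 1 * EH A a (b - 1) c d) (c * S 0 2 * EH A a b (c - 1) d) (d * S 0 3 * EH A a b c (d - 1))) hw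
      rw [hfac]
      nlinarith

lemma pow_three_le (x y z : ℝ) (hx : 0 ≤ x) (hy : 0 ≤ y) (hz : 0 ≤ z) (i j k : ℕ) :
    x ^ i * y ^ j * z ^ k ≤ x ^ (i + j + k) + y ^ (i + j + k) + z ^ (i + j + k) := by
  have key : ∀ M, x ≤ M → y ≤ M → z ≤ M → x ^ i * y ^ j * z ^ k ≤ M ^ (i + j + k) := by
    intro M h1 h2 h3
    have : 0 ≤ M := hx.trans h1
    rw [pow_add, pow_add]
    gcongr
  have px := pow_nonneg hx (i + j + k)
  have py := pow_nonneg hy (i + j + k)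
  have pz := pow_nonneg hz (i + j + k)
  rcases le_total x y with h1 | h1
  · rcases le_total y z with h2 | h2
    · have := key z (h1.trans h2) h2 le_rfl; linarith
    · have := key y h1 le_rfl h2; linarith
  · rcases le_total x z with h2 | h2
    · have := key z h2 (h1.trans h2) le_rfl; linarith
    · have := key x le_rfl h1 h2; linarith

lemma EH_four (A : Matrix (Fin 4) (Fin 4) ℝ) (h : ∀ i, (A * A.transpose) i i = 1) (q : ℕ) :
    |EH A q q q q| ≤ ((4 * q).factorial : ℝ) *
      ((|(A * A.transpose) 0 1| * |(A * A.transpose) 2 3|) ^ q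
      + (|(A * A.transpose) 0 2| * |(A * A.transpose) 1 3|) ^ q
      + (|(A * A.transpose) 0 3| * |(A * A.transpose) 1 2|) ^ q) := by
  have := EH_bound A h (4 * q) q q q q (by omega) 1 ((|(A * A.transpose) 0 1| * |(A * A.transpose) 2 3|) ^ q
      + (|(A * A.transpose) 0 2| * |(A * A.transpose) 1 3|) ^ q
      + (|(A * A.transpose) 0 3| * |(A * A.transpose) 1 2|) ^ q) zero_le_one (by positivity) (by
    intro i j k l m n h1 h2 h3 h4
    obtain ⟨rfl, rfl, rfl⟩ : n = i ∧ m = j ∧ l = k := by omega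
    have := pow_three_le (|(A * A.transpose) 0 1| * |(A * A.transpose) 2 3|) (|(A * A.transpose) 0 2| * |(A * A.transpose) 1 3|) (|(A * A.transpose) 0 3| * |(A * A.transpose) 1 2|) (by positivity) (by positivity) (by positivity) n m l
    rw [← h1] at this
    refine le_trans (le_of_eq ?_) this
    ring)
  simpa using this

open scoped MatrixOrder in
lemma gauss_law {Ω : Type*} [MeasurableSpace Ω] (μ : Measure Ω) [IsProbabilityMeasure μ]
    (X : Fin 4 → Ω → ℝ) (hX : ∀ i, Measurable (X i))
    (hG : ∀ c : Fin 4 → ℝ, ∃ v : NNReal, μ.map (fun ω => ∑ i, c i * X i ω) = gaussianReal 0 v)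
    (S : Matrix (Fin 4) (Fin 4) ℝ) (hS : ∀ i j, ∫ ω, X i ω * X j ω ∂μ = S i j) :
    ∃ A : Matrix (Fin 4) (Fin 4) ℝ, A * A.transpose = S ∧ ∀ p : MvPolynomial (Fin 4) ℝ,
      Integrable (fun ω => MvPolynomial.eval (fun i => X i ω) p) μ ∧
      ∫ ω, MvPolynomial.eval (fun i => X i ω) p ∂μ = LG A p := by
  have hL2 : ∀ i, MemLp (X i) 2 μ := by
    intro i
    obtain ⟨v, hv⟩ := hG (Pi.single i 1)
    have e : (fun ω => ∑ j, (Pi.single i 1 : Fin 4 → ℝ) j * X j ω) = X i := by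
      ext ω; simp [Pi.single_apply]
    rw [e] at hv
    have := memLp_id_gaussianReal (μ := 0) (v := v) 2
    rw [← hv] at this
    exact (memLp_map_measure_iff (by fun_prop) (hX i).aemeasurable).1 this
  have hIntg : ∀ i j, Integrable (fun ω => X i ω * X j ω) μ := fun i j => (hL2 i).integrable_mul (hL2 j)
  have hquad : ∀ c : Fin 4 → ℝ, ∫ ω, (∑ i, c i * X i ω) ^ 2 ∂μ = c ⬝ᵥ S.mulVec c := by
    intro c
    have : ∀ ω, (∑ i, c i * X i ω) ^ 2 = ∑ i, ∑ j, (c i * c j) * (X i ω * X j ω) := by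
      intro ω
      rw [sq, Finset.sum_mul_sum]
      refine Finset.sum_congr rfl fun i _ => Finset.sum_congr rfl fun j _ => by ring
    simp_rw [this]
    rw [integral_finsetSum _ (fun i _ => integrable_finsetSum _ fun j _ => (hIntg i j).const_mul _)]
    simp_rw [integral_finsetSum _ (fun j _ => (hIntg _ j).const_mul _), integral_const_mul, hS,
      dotProduct, Matrix.mulVec, dotProduct, Finset.mul_sum]
    refine Finset.sum_congr rfl fun i _ => Finset.sum_congr rfl fun j _ => by ring
  have hvar : ∀ c : Fin 4 → ℝ, μ.map (fun ω => ∑ i, c i * X i ω) = gaussianReal 0 (c ⬝ᵥ S.mulVec c).toNNReal := by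
    intro c
    obtain ⟨v, hv⟩ := hG c
    rw [hv]
    congr 1
    have h1 : Var[fun x => x; gaussianReal 0 v] = v := variance_fun_id_gaussianReal
    rw [variance_of_integral_eq_zero (by fun_prop) (by simp), ← hv, integral_map (by fun_prop) (by fun_prop), hquad] at h1
    rw [h1, Real.toNNReal_coe]
  have hpos : S.PosSemidef := by
    refine Matrix.PosSemidef.of_dotProduct_mulVec_nonneg ?_ ?_
    · ext i j
      simp only [Matrix.conjTranspose_apply, star_trivial, ← hS]
      simp_rw [mul_comm]
    · intro c
      simp only [star_trivial]
      rw [← hquad]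
      exact integral_nonneg fun ω => sq_nonneg _
  have hlaw : μ.map (fun ω => WithLp.toLp 2 (fun i => X i ω)) = multivariateGaussian 0 S := by
    have hm : Measurable (fun ω => WithLp.toLp 2 (fun i => X i ω)) := by fun_prop
    have : IsProbabilityMeasure (μ.map (fun ω => WithLp.toLp 2 (fun i => X i ω))) :=
      Measure.isProbabilityMeasure_map hm.aemeasurable
    apply Measure.ext_of_charFun
    ext t
    rw [charFun_multivariateGaussian hpos, charFun_apply, integral_map hm.aemeasurable (by fun_prop)]
    have h2 := congrArg (fun ν => charFun ν 1) (hvar t)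
    simp only [charFun_gaussianReal] at h2
    rw [charFun_apply, integral_map (by fun_prop) (by fun_prop)] at h2
    have h3 : 0 ≤ (t : Fin 4 → ℝ) ⬝ᵥ S.mulVec t := by
      rw [← hquad]; exact integral_nonneg fun ω => sq_nonneg _
    have h4 : ∀ ω, inner ℝ (WithLp.toLp 2 (fun i => X i ω)) t = ∑ i, t i * X i ω := by
      intro ω; simp [PiLp.inner_apply]
    simp only [h4]
    convert h2 using 1
    · simp
    · simp [Real.coe_toNNReal _ h3]
  refine ⟨CFC.sqrt S, ?_, ?_⟩
  · have hs : (CFC.sqrt S).transpose = CFC.sqrt S := by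
      have : IsSelfAdjoint (CFC.sqrt S) := by cfc_tac
      have h := this.star_eq
      rw [Matrix.star_eq_conjTranspose] at h
      rw [← Matrix.conjTranspose_eq_transpose_of_trivial]
      exact h
    rw [hs]
    exact CFC.sqrt_mul_sqrt_self S hpos.nonneg
  · intro p
    have hpm : Measurable (fun z : Fin 4 → ℝ => MvPolynomial.eval z p) := (MvPolynomial.continuous_eval p).measurable
    have hmap : μ.map (fun ω i => X i ω) = stdG.map (fun z => (CFC.sqrt S).mulVec z) := by
      have h1 := congrArg (fun ν => ν.map (WithLp.ofLp)) hlaw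
      beta_reduce at h1
      rw [Measure.map_map (by fun_prop) (by fun_prop), multivariateGaussian, ← map_pi_eq_stdGaussian,
        Measure.map_map (by fun_prop) (by fun_prop), Measure.map_map (by fun_prop) (by fun_prop)] at h1
      refine Eq.trans (show _ = _ from rfl) (h1.trans ?_)
      unfold stdG
      congr 1
      ext z i
      simp
    have i1 : Integrable (fun z => MvPolynomial.eval z p) (μ.map (fun ω i => X i ω)) := by
      rw [hmap, integrable_map_measure hpm.aestronglyMeasurable (by fun_prop)]
      exact linG_integrable _ p
    refine ⟨?_, ?_⟩
    · exact (integrable_map_measure hpm.aestronglyMeasurable (by fun_prop)).1 i1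
    · have := integral_map (μ := μ) (φ := fun ω i => X i ω) (by fun_prop) (f := fun z => MvPolynomial.eval z p) hpm.aestronglyMeasurable
      have hA : Measurable (fun z : Fin 4 → ℝ => (CFC.sqrt S).mulVec z) := by fun_prop
      rw [← this, hmap, integral_map hA.aemeasurable hpm.aestronglyMeasurable]
      rfl

noncomputable def rho (H r : ℝ) : ℝ :=
  (|r + 1| ^ (2 * H) + |r - 1| ^ (2 * H) - 2 * |r| ^ (2 * H)) / 2

lemma rho_neg (H r : ℝ) : rho H (-r) = rho H r := by
  unfold rho
  rw [show -r + 1 = -(r - 1) by ring, show -r - 1 = -(r + 1) by ring, abs_neg, abs_neg, abs_neg]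
  ring

lemma rho_zero (H : ℝ) (hH : 0 < H) : rho H 0 = 1 := by
  unfold rho
  have : (2 * H) ≠ 0 := by positivity
  simp [Real.zero_rpow this]

lemma rho_bound (H : ℝ) (hH : 0 < H) (hH1 : H < 1) (x : ℝ) (hx : 1 < x) :
    |rho H x| ≤ (x - 1) ^ (2 * H - 2) := by
  set p := 2 * H with hp
  have hp0 : 0 < p := by positivity
  have hp2 : p < 2 := by linarith
  have hf : ∀ y : ℝ, 0 < y → HasDerivAt (fun y : ℝ => y ^ p) (p * y ^ (p - 1)) y := fun y hy =>
    Real.hasDerivAt_rpow_const (Or.inl hy.ne')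
  have hf2 : ∀ y : ℝ, 0 < y → HasDerivAt (fun y : ℝ => p * y ^ (p - 1)) (p * ((p - 1) * y ^ (p - 1 - 1))) y :=
    fun y hy => (Real.hasDerivAt_rpow_const (Or.inl hy.ne')).const_mul p
  have hg : ∀ y : ℝ, 0 < y → HasDerivAt (fun y : ℝ => (y + 1) ^ p - y ^ p)
      (p * (y + 1) ^ (p - 1) - p * y ^ (p - 1)) y := fun y hy =>
    ((hf (y + 1) (by linarith)).comp_add_const y 1).sub (hf y hy)
  obtain ⟨η, hη, e1⟩ := exists_hasDerivAt_eq_slope (fun y : ℝ => (y + 1) ^ p - y ^ p)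
    (fun y => p * (y + 1) ^ (p - 1) - p * y ^ (p - 1)) (show x - 1 < x by linarith)
    (by
      refine ContinuousOn.sub ?_ ?_
      · exact ContinuousOn.rpow_const (by fun_prop) (fun y _ => Or.inr hp0.le)
      · exact ContinuousOn.rpow_const (by fun_prop) (fun y _ => Or.inr hp0.le))
    (fun y hy => hg y (by linarith [hy.1]))
  have hη0 : 0 < η := by linarith [hη.1]
  obtain ⟨ξ, hξ, e2⟩ := exists_hasDerivAt_eq_slope (fun y : ℝ => p * y ^ (p - 1))
    (fun y : ℝ => p * ((p - 1) * y ^ (p - 1 - 1))) (show η < η + 1 by linarith)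
    (fun y hy => (hf2 y (by linarith [hy.1])).continuousAt.continuousWithinAt)
    (fun y hy => hf2 y (by linarith [hy.1]))
  have hξ0 : x - 1 < ξ := by linarith [hη.1, hξ.1]
  have e : 2 * rho H x = p * ((p - 1) * ξ ^ (p - 2)) := by
    have h1 : 2 * rho H x = ((x + 1) ^ p - x ^ p) - ((x - 1 + 1) ^ p - (x - 1) ^ p) := by
      unfold rho
      rw [abs_of_pos (by linarith : 0 < x + 1), abs_of_pos (by linarith : 0 < x - 1), abs_of_pos (by linarith : 0 < x), ← hp]
      simp only [sub_add_cancel]; ring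
    rw [h1]
    simp only [sub_sub_cancel, div_one, add_sub_cancel_left] at e1 e2
    rw [show p - 2 = p - 1 - 1 by ring, e2, e1]
  have hb : ξ ^ (p - 2) ≤ (x - 1) ^ (p - 2) :=
    Real.rpow_le_rpow_of_nonpos (by linarith) hξ0.le (by linarith)
  have hn : 0 ≤ ξ ^ (p - 2) := Real.rpow_nonneg (by linarith) _
  have h2 : |2 * rho H x| ≤ 2 * ξ ^ (p - 2) := by
    rw [e, abs_mul p, abs_mul (p - 1), abs_of_nonneg hn, abs_of_pos hp0]
    have : |p - 1| ≤ 1 := abs_le.2 ⟨by linarith, by linarith⟩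
    calc p * (|p - 1| * ξ ^ (p - 2)) ≤ 2 * (1 * ξ ^ (p - 2)) := by gcongr
      _ = _ := by ring
  rw [abs_mul, abs_of_pos (by norm_num : (0:ℝ) < 2)] at h2
  linarith

lemma rho_summable (q : ℕ) (hq : 2 ≤ q) (H : ℝ) (hH : 0 < H) (hH1 : H < 1 - 1 / (2 * q)) :
    Summable (fun r : ℤ => |rho H r| ^ q) := by
  have hq0 : (0 : ℝ) < q := by exact_mod_cast (by omega : 0 < q)
  have hH1' : H < 1 := by
    have : (0:ℝ) < 1 / (2 * q) := by positivity
    linarith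
  have hnat : Summable (fun r : ℕ => |rho H (r : ℝ)| ^ q) := by
    rw [← summable_nat_add_iff 2]
    have hs : Summable (fun m : ℕ => ((m : ℝ)) ^ ((2 * H - 2) * q)) := by
      rw [Real.summable_nat_rpow]
      have : (1 / (2 * q) : ℝ) * (2 * q) = 1 := by field_simp
      nlinarith
    rw [← summable_nat_add_iff 1] at hs
    refine Summable.of_nonneg_of_le (fun m => by positivity) (fun m => ?_) hs
    have := rho_bound H hH hH1' ((m + 2 : ℕ) : ℝ) (by push_cast; linarith [Nat.cast_nonneg (α := ℝ) m])
    rw [Real.rpow_mul (by positivity), Real.rpow_natCast]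
    refine pow_le_pow_left₀ (abs_nonneg _) (this.trans (le_of_eq ?_)) q
    congr 1
    push_cast; ring
  refine Summable.of_nat_of_neg ?_ ?_
  · simpa using hnat
  · refine hnat.congr fun m => ?_
    push_cast
    rw [rho_neg]

lemma rho_sum (q : ℕ) (hq : 2 ≤ q) (H : ℝ) (hH : 0 < H) (hH1 : H < 1 - 1 / (2 * q)) :
    ∃ K : ℝ, 0 ≤ K ∧ ∀ n : ℕ, ∑ i ∈ Finset.range n, ∑ j ∈ Finset.range n,
      |rho H ((i : ℝ) - j)| ^ q ≤ K * n := by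
  have hs := rho_summable q hq H hH hH1
  refine ⟨∑' r : ℤ, |rho H r| ^ q, tsum_nonneg fun _ => by positivity, fun n => ?_⟩
  have : ∀ i ∈ Finset.range n, ∑ j ∈ Finset.range n, |rho H ((i : ℝ) - j)| ^ q ≤ ∑' r : ℤ, |rho H r| ^ q := by
    intro i _
    have h1 := hs.sum_le_tsum ((Finset.range n).image (fun j : ℕ => (i : ℤ) - j)) (fun _ _ => by positivity)
    rw [Finset.sum_image (by intro a _ b _ h; simpa using h)] at h1
    simpa using h1
  refine (Finset.sum_le_sum this).trans (le_of_eq ?_)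
  simp [mul_comm]

set_option linter.unusedSectionVars false

section fbm
variable {Ω : Type*} [MeasureSpace Ω] [IsProbabilityMeasure (ℙ : Measure Ω)]

/-- normalized increments -/
noncomputable def incr (B : ℝ → Ω → ℝ) (H : ℝ) (n k : ℕ) (ω : Ω) : ℝ :=
  (n : ℝ) ^ H * (B (((k : ℝ) + 1) / n) ω - B ((k : ℝ) / n) ω)

lemma fbm_memLp {B : ℝ → Ω → ℝ} {H : ℝ} (hB : IsFractionalBrownianMotion B H) (t : ℝ) (ht : 0 ≤ t) :
    MemLp (B t) 2 (ℙ : Measure Ω) := by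
  obtain ⟨v, hv⟩ := hB.gaussian_fdd 1 (fun _ => t) (fun _ => ht) (fun _ => 1)
  simp only [Finset.univ_unique, Finset.sum_const, Finset.card_singleton, one_smul, one_mul] at hv
  have := memLp_id_gaussianReal (μ := 0) (v := v) 2
  rw [← hv] at this
  exact (memLp_map_measure_iff (by fun_prop) (hB.measurable t).aemeasurable).1 this

lemma incr_cov {B : ℝ → Ω → ℝ} {H : ℝ} (hB : IsFractionalBrownianMotion B H) (n : ℕ) (hn : 1 ≤ n)
    (k l : ℕ) : ∫ ω, incr B H n k ω * incr B H n l ω = rho H ((k : ℝ) - l) := by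
  have hn0 : (0 : ℝ) < n := by exact_mod_cast hn
  have hi : ∀ s t : ℝ, 0 ≤ s → 0 ≤ t → Integrable (fun ω => B s ω * B t ω) (ℙ : Measure Ω) :=
    fun s t hs ht => (fbm_memLp hB s hs).integrable_mul (fbm_memLp hB t ht)
  have e : ∀ ω, incr B H n k ω * incr B H n l ω = (n : ℝ) ^ (2 * H) *
      (B (((k : ℝ) + 1) / n) ω * B (((l : ℝ) + 1) / n) ω - B (((k : ℝ) + 1) / n) ω * B ((l : ℝ) / n) ω
        - B ((k : ℝ) / n) ω * B (((l : ℝ) + 1) / n) ω + B ((k : ℝ) / n) ω * B ((l : ℝ) / n) ω) := by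
    intro ω
    unfold incr
    rw [two_mul, Real.rpow_add hn0]; ring
  have p1 : 0 ≤ ((k : ℝ) + 1) / n := by positivity
  have p2 : 0 ≤ ((l : ℝ) + 1) / n := by positivity
  have p3 : 0 ≤ (k : ℝ) / n := by positivity
  have p4 : 0 ≤ (l : ℝ) / n := by positivity
  simp_rw [e]
  have sc : ∀ x y : ℝ, |y / n - x / n| ^ (2 * H) = |y - x| ^ (2 * H) / (n : ℝ) ^ (2 * H) := by
    intro x y
    rw [← sub_div, abs_div, abs_of_pos hn0, Real.div_rpow (abs_nonneg _) hn0.le]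
  have q1 : Integrable (fun ω => B (((k : ℝ) + 1) / n) ω * B (((l : ℝ) + 1) / n) ω
      - B (((k : ℝ) + 1) / n) ω * B ((l : ℝ) / n) ω) (ℙ : Measure Ω) := (hi _ _ p1 p2).sub (hi _ _ p1 p4)
  have q2 : Integrable (fun ω => B (((k : ℝ) + 1) / n) ω * B (((l : ℝ) + 1) / n) ω
      - B (((k : ℝ) + 1) / n) ω * B ((l : ℝ) / n) ω - B ((k : ℝ) / n) ω * B (((l : ℝ) + 1) / n) ω)
      (ℙ : Measure Ω) := q1.sub (hi _ _ p3 p2)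
  rw [integral_const_mul, integral_add q2 (hi _ _ p3 p4), integral_sub q1 (hi _ _ p3 p2), integral_sub (hi _ _ p1 p2) (hi _ _ p1 p4),
    hB.covariance _ _ p1 p2, hB.covariance _ _ p1 p4, hB.covariance _ _ p3 p2, hB.covariance _ _ p3 p4]
  simp only [sc]
  have hnH : (n : ℝ) ^ (2 * H) ≠ 0 := (Real.rpow_pos_of_pos hn0 _).ne'
  unfold rho
  rw [show |(l : ℝ) + 1 - (k + 1)| = |(k : ℝ) - l| by rw [← abs_neg]; congr 1; ring,
    show |(l : ℝ) - k| = |(k : ℝ) - l| from abs_sub_comm _ _,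
    show |(l : ℝ) + 1 - k| = |(k : ℝ) - l - 1| by rw [← abs_neg]; congr 1; ring,
    show |(l : ℝ) - (k + 1)| = |(k : ℝ) - l + 1| by rw [← abs_neg]; congr 1; ring]
  field_simp
  ring

lemma incr_measurable {B : ℝ → Ω → ℝ} {H : ℝ} (hB : IsFractionalBrownianMotion B H) (n k : ℕ) :
    Measurable (incr B H n k) := by
  unfold incr
  exact ((hB.measurable _).sub (hB.measurable _)).const_mul _

lemma incr_gauss {B : ℝ → Ω → ℝ} {H : ℝ} (hB : IsFractionalBrownianMotion B H) (n : ℕ)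
    (k : Fin 4 → ℕ) (c : Fin 4 → ℝ) : ∃ v : NNReal,
    (ℙ : Measure Ω).map (fun ω => ∑ i, c i * incr B H n (k i) ω) = gaussianReal 0 v := by
  obtain ⟨v, hv⟩ := hB.gaussian_fdd (4 + 4)
    (Fin.append (fun i => ((k i : ℝ) + 1) / n) (fun i => (k i : ℝ) / n))
    (fun i => by
      refine Fin.addCases (fun i => ?_) (fun i => ?_) i
      · rw [Fin.append_left]; positivity
      · rw [Fin.append_right]; positivity)
    (Fin.append (fun i => c i * (n : ℝ) ^ H) (fun i => - (c i * (n : ℝ) ^ H)))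
  refine ⟨v, ?_⟩
  rw [← hv]
  congr 1
  ext ω
  rw [Fin.sum_univ_add]
  simp only [Fin.append_left, Fin.append_right]
  rw [← Finset.sum_add_distrib]
  refine Finset.sum_congr rfl fun i _ => ?_
  unfold incr; ring

lemma eval_hm (z : Fin 4 → ℝ) (i : Fin 4) (q : ℕ) :
    MvPolynomial.eval z (hm i q) = Polynomial.aeval (z i) (Polynomial.hermite q) := by
  have h1 : MvPolynomial.eval z (hm i q) = Polynomial.eval (z i) (hr q) := by
    unfold hm
    have := (Polynomial.aeval_algHom_apply (MvPolynomial.aeval (R := ℝ) z) (MvPolynomial.X i) (hr q)).symm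
    simpa [MvPolynomial.aeval_eq_eval, Polynomial.aeval_def, Polynomial.eval₂_eq_eval_map] using this
  rw [h1, hr, Polynomial.eval_map, Polynomial.aeval_def]
  rfl

lemma four_prod {B : ℝ → Ω → ℝ} {H : ℝ} (hH : 0 < H) (hB : IsFractionalBrownianMotion B H) (n : ℕ)
    (hn : 1 ≤ n) (q : ℕ) (a b c d : ℕ) :
    Integrable (fun ω => Polynomial.aeval (incr B H n a ω) (Polynomial.hermite q) *
      Polynomial.aeval (incr B H n b ω) (Polynomial.hermite q) *
      Polynomial.aeval (incr B H n c ω) (Polynomial.hermite q) *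
      Polynomial.aeval (incr B H n d ω) (Polynomial.hermite q)) (ℙ : Measure Ω) ∧
    ∫ ω, Polynomial.aeval (incr B H n a ω) (Polynomial.hermite q) *
      Polynomial.aeval (incr B H n b ω) (Polynomial.hermite q) *
      Polynomial.aeval (incr B H n c ω) (Polynomial.hermite q) *
      Polynomial.aeval (incr B H n d ω) (Polynomial.hermite q) ≤
      ((4 * q).factorial : ℝ) * (|rho H ((a : ℝ) - b)| ^ q * |rho H ((c : ℝ) - d)| ^ q
        + |rho H ((a : ℝ) - c)| ^ q * |rho H ((b : ℝ) - d)| ^ q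
        + |rho H ((a : ℝ) - d)| ^ q * |rho H ((b : ℝ) - c)| ^ q) := by
  obtain ⟨A, hA, hp⟩ := gauss_law (ℙ : Measure Ω) (fun i => incr B H n (![a, b, c, d] i))
    (fun i => incr_measurable hB n _) (fun e => incr_gauss hB n _ e)
    (Matrix.of fun i j => rho H ((![a, b, c, d] i : ℝ) - (![a, b, c, d] j : ℝ)))
    (fun i j => by
      rw [incr_cov hB n hn]
      fin_cases i <;> fin_cases j <;> rfl)
  obtain ⟨h1, h2⟩ := hp (hm 0 q * hm 1 q * hm 2 q * hm 3 q)
  simp only [map_mul, eval_hm] at h1 h2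
  refine ⟨h1, ?_⟩
  refine (le_of_eq h2).trans ((le_abs_self _).trans ?_)
  have h3 := EH_four A (fun i => by rw [hA]; simp [rho_zero H hH]) q
  rw [hA] at h3
  simp only [mul_pow] at h3
  exact h3

lemma fourth_moment (q : ℕ) (hq : 2 ≤ q) (H : ℝ) (hH0 : 0 < H) (hH1 : H < 1 - 1 / (2 * q))
    (B : ℝ → Ω → ℝ) (hB : IsFractionalBrownianMotion B H) :
    ∃ K : ℝ, 0 ≤ K ∧ ∀ n : ℕ, 1 ≤ n → Integrable (fun ω => hermiteVariation B H q n ω ^ 4) (ℙ : Measure Ω)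
      ∧ ∫ ω, hermiteVariation B H q n ω ^ 4 ≤ K * (n : ℝ) ^ 2 := by
  obtain ⟨K, hK0, hK⟩ := rho_sum q hq H hH0 hH1
  refine ⟨((4 * q).factorial : ℝ) * 3 * K ^ 2, by positivity, fun n hn => ?_⟩
  set h : ℕ → Ω → ℝ := fun k ω => Polynomial.aeval (incr B H n k ω) (Polynomial.hermite q) with hh
  have hV : ∀ ω, hermiteVariation B H q n ω ^ 4 = ∑ a ∈ Finset.range n, ∑ b ∈ Finset.range n,
      ∑ c ∈ Finset.range n, ∑ d ∈ Finset.range n, h a ω * h b ω * h c ω * h d ω := by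
    intro ω
    have e : hermiteVariation B H q n ω = ∑ k ∈ Finset.range n, h k ω := rfl
    rw [e]
    simp_rw [← Finset.mul_sum, ← Finset.sum_mul, ← Finset.mul_sum, ← Finset.sum_mul]
    rw [← Finset.sum_mul_sum]
    ring
  have hI := fun a b c d => (four_prod hH0 hB n hn q a b c d).1
  have hE := fun a b c d => (four_prod hH0 hB n hn q a b c d).2
  simp_rw [hV]
  have i1 := fun a b c => integrable_finsetSum (Finset.range n) (fun d _ => hI a b c d)
  have i2 := fun a b => integrable_finsetSum (Finset.range n) (fun c _ => i1 a b c)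
  have i3 := fun a => integrable_finsetSum (Finset.range n) (fun b _ => i2 a b)
  have i4 := integrable_finsetSum (Finset.range n) (fun a _ => i3 a)
  refine ⟨i4, ?_⟩
  rw [integral_finsetSum _ (fun a _ => i3 a)]
  simp_rw [integral_finsetSum _ (fun b _ => i2 _ b), integral_finsetSum _ (fun b _ => i1 _ _ b),
    integral_finsetSum _ (fun b _ => hI _ _ _ b)]
  set r : ℕ → ℕ → ℝ := fun a b => |rho H ((a : ℝ) - b)| ^ q with hr
  set R := ∑ a ∈ Finset.range n, ∑ b ∈ Finset.range n, r a b with hR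
  have hR0 : 0 ≤ R := Finset.sum_nonneg fun _ _ => Finset.sum_nonneg fun _ _ => by positivity
  have t1 : ∑ a ∈ Finset.range n, ∑ b ∈ Finset.range n, ∑ c ∈ Finset.range n, ∑ d ∈ Finset.range n,
      r a b * r c d = R ^ 2 := by
    simp_rw [← Finset.mul_sum, ← Finset.sum_mul]
    rw [sq]
  have t2 : ∑ a ∈ Finset.range n, ∑ b ∈ Finset.range n, ∑ c ∈ Finset.range n, ∑ d ∈ Finset.range n,
      r a c * r b d = R ^ 2 := by
    rw [← t1]
    refine Finset.sum_congr rfl fun a _ => ?_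
    rw [Finset.sum_comm]
  have t3 : ∑ a ∈ Finset.range n, ∑ b ∈ Finset.range n, ∑ c ∈ Finset.range n, ∑ d ∈ Finset.range n,
      r a d * r b c = R ^ 2 := by
    rw [← t2]
    refine Finset.sum_congr rfl fun a _ => Finset.sum_congr rfl fun b _ => ?_
    rw [Finset.sum_comm]
  calc _ ≤ ∑ a ∈ Finset.range n, ∑ b ∈ Finset.range n, ∑ c ∈ Finset.range n, ∑ d ∈ Finset.range n,
        ((4 * q).factorial : ℝ) * (r a b * r c d + r a c * r b d + r a d * r b c) :=
        Finset.sum_le_sum fun a _ => Finset.sum_le_sum fun b _ => Finset.sum_le_sum fun c _ =>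
          Finset.sum_le_sum fun d _ => hE a b c d
    _ = ((4 * q).factorial : ℝ) * (R ^ 2 + R ^ 2 + R ^ 2) := by
        simp_rw [← Finset.mul_sum, Finset.sum_add_distrib, t1, t2, t3]
    _ ≤ ((4 * q).factorial : ℝ) * 3 * K ^ 2 * (n : ℝ) ^ 2 := by
        have : R ^ 2 ≤ (K * n) ^ 2 := pow_le_pow_left₀ hR0 (hK n) 2
        have hf : (0 : ℝ) ≤ (4 * q).factorial := by positivity
        nlinarith [mul_le_mul_of_nonneg_left this hf]

lemma tail_bound (q : ℕ) (hq : 2 ≤ q) (H : ℝ) (hH0 : 0 < H) (hH1 : H < 1 - 1 / (2 * q))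
    (B : ℝ → Ω → ℝ) (hB : IsFractionalBrownianMotion B H) :
    ∃ K : ℝ, 0 ≤ K ∧ ∀ n : ℕ, 1 ≤ n → ∀ ε : ℝ, 0 < ε →
      (ℙ {ω | ε * (n : ℝ) < |hermiteVariation B H q n ω|}).toReal ≤ K / (ε ^ 2 * n) ^ 2 := by
  obtain ⟨K, hK0, hK⟩ := fourth_moment q hq H hH0 hH1 B hB
  refine ⟨K, hK0, fun n hn ε hε => ?_⟩
  obtain ⟨h1, h2⟩ := hK n hn
  have hn0 : (0 : ℝ) < n := by exact_mod_cast hn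
  have h3 := mul_meas_ge_le_integral_of_nonneg (μ := (ℙ : Measure Ω))
    (ae_of_all _ fun ω => by positivity) h1 ((ε * n) ^ 4)
  have h4 : (ℙ {ω | ε * (n : ℝ) < |hermiteVariation B H q n ω|}).toReal ≤
    (ℙ : Measure Ω).real {ω | (ε * n) ^ 4 ≤ hermiteVariation B H q n ω ^ 4} := by
    refine measureReal_mono (fun ω hω => ?_) (measure_ne_top _ _)
    change ε * (n : ℝ) < _ at hω
    change (ε * n) ^ 4 ≤ hermiteVariation B H q n ω ^ 4
    rw [← Even.pow_abs (by decide : Even 4) (hermiteVariation B H q n ω)]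
    exact pow_le_pow_left₀ (by positivity) hω.le 4
  refine h4.trans ?_
  rw [le_div_iff₀ (by positivity)]
  have h5 : 0 < (n : ℝ) ^ 2 := by positivity
  have h6 := h3.trans h2
  refine le_of_mul_le_mul_right ?_ h5
  refine le_trans (le_of_eq ?_) h6
  ring

end fbm

/-- Gaussian two-sided tail -/
noncomputable def gtail (s : ℝ) : ℝ := (gaussianReal 0 1).real {x | s < |x|}

lemma gtail_meas (s : ℝ) : MeasurableSet {x : ℝ | s < |x|} :=
  measurableSet_lt measurable_const (by fun_prop)

lemma gtail_null (s : ℝ) : (gaussianReal 0 1) {x | |x| = s} = 0 := by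
  have : NullSingletonClass (gaussianReal 0 1) := nullSingletonClass_gaussianReal one_ne_zero
  refine measure_mono_null (t := {s, -s}) ?_ ((Set.toFinite _).measure_zero _)
  intro x hx
  have hx' : |x| = s := hx
  rcases abs_choice x with h | h
  · left; rw [← hx', h]
  · right; rw [Set.mem_singleton_iff, ← hx', h, neg_neg]

lemma gtail_cont (s : ℝ) : ContinuousAt gtail s := by
  have e : gtail = fun s => ∫ x, ({x : ℝ | s < |x|}.indicator (fun _ => (1 : ℝ)) x) ∂(gaussianReal 0 1) := by
    ext s
    rw [integral_indicator_const _ (gtail_meas s)]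
    simp [gtail]
  rw [e]
  refine continuousAt_of_dominated (bound := fun _ => 1) ?_ ?_ (integrable_const _) ?_
  · exact Eventually.of_forall fun t => (measurable_const.indicator (gtail_meas t)).aestronglyMeasurable
  · refine Eventually.of_forall fun t => ae_of_all _ fun x => ?_
    refine (norm_indicator_le_norm_self _ _).trans (by simp)
  · have h0 : ∀ᵐ x ∂(gaussianReal 0 1), ¬ (|x| = s) := by
      rw [ae_iff]; simpa using gtail_null s
    filter_upwards [h0] with x hx
    rcases lt_or_gt_of_ne hx with h | h
    · refine ContinuousAt.congr (f := fun _ => (0 : ℝ)) continuousAt_const ?_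
      filter_upwards [lt_mem_nhds h] with t ht
      rw [Set.indicator_of_notMem]
      exact fun h' => lt_asymm (show t < |x| from h') ht
    · refine ContinuousAt.congr (f := fun _ => (1 : ℝ)) continuousAt_const ?_
      filter_upwards [gt_mem_nhds h] with t ht
      rw [Set.indicator_of_mem]
      exact ht

lemma gtail_integral (c : ℝ) (hc : 0 < c) : ∫ x in Set.Ioi (0 : ℝ), gtail (√x / c) = c ^ 2 := by
  have hi : Integrable (fun x : ℝ => c ^ 2 * x ^ 2) (gaussianReal 0 1) := (gauss_integrable_pow 2).const_mul _
  have h := hi.integral_eq_integral_meas_lt (ae_of_all _ fun x => by positivity)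
  have h2 : ∫ x : ℝ, x ^ 2 ∂(gaussianReal 0 1) = 1 := by
    rw [gauss_pow_ibp 1]; simp
  rw [integral_const_mul, h2, mul_one] at h
  rw [h]
  refine setIntegral_congr_fun measurableSet_Ioi fun t ht => ?_
  have ht0 : (0 : ℝ) < t := ht
  simp only [gtail]
  congr 1
  ext x
  change √t / c < |x| ↔ t < c ^ 2 * x ^ 2
  rw [div_lt_iff₀ hc, Real.sqrt_lt ht0.le (by positivity), mul_pow, sq_abs, mul_comm]

section
variable {Ω : Type*} [MeasurableSpace Ω] (μ : Measure Ω) [IsProbabilityMeasure μ]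

lemma clt_tail (Z : ℕ → Ω → ℝ) (hZ : ∀ n, Measurable (Z n))
    (hconv : ∀ f : BoundedContinuousFunction ℝ ℝ,
      Tendsto (fun n => ∫ ω, f (Z n ω) ∂μ) atTop (𝓝 (∫ x, f x ∂(gaussianReal 0 1)))) (s : ℝ) :
    Tendsto (fun n => μ.real {ω | s < |Z n ω|}) atTop (𝓝 (gtail s)) := by
  let ν : ℕ → ProbabilityMeasure ℝ := fun n =>
    ⟨μ.map (Z n), Measure.isProbabilityMeasure_map (hZ n).aemeasurable⟩
  let γ : ProbabilityMeasure ℝ := ⟨gaussianReal 0 1, inferInstance⟩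
  have h1 : Tendsto ν atTop (𝓝 γ) := by
    rw [ProbabilityMeasure.tendsto_iff_forall_integral_tendsto]
    intro f
    have := hconv f
    refine this.congr fun n => ?_
    exact (integral_map (hZ n).aemeasurable f.continuous.aestronglyMeasurable).symm
  have h2 := ProbabilityMeasure.tendsto_measure_of_null_frontier_of_tendsto' h1 (E := {x : ℝ | s < |x|})
    (measure_mono_null (fun x hx => (frontier_lt_subset_eq continuous_const continuous_abs hx).symm) (gtail_null s))
  have h3 := (ENNReal.tendsto_toReal (measure_ne_top _ _)).comp h2
  refine h3.congr fun n => ?_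
  change ((μ.map (Z n)) _).toReal = _
  rw [Measure.map_apply (hZ n) (gtail_meas s)]
  rfl

lemma clt_tail_moving (Z : ℕ → Ω → ℝ) (hZ : ∀ n, Measurable (Z n))
    (hconv : ∀ f : BoundedContinuousFunction ℝ ℝ,
      Tendsto (fun n => ∫ ω, f (Z n ω) ∂μ) atTop (𝓝 (∫ x, f x ∂(gaussianReal 0 1))))
    {ι : Type*} (l : Filter ι) (N : ι → ℕ) (hN : Tendsto N l atTop) (t : ι → ℝ) (s : ℝ)
    (ht : Tendsto t l (𝓝 s)) :
    Tendsto (fun i => μ.real {ω | t i < |Z (N i) ω|}) l (𝓝 (gtail s)) := by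
  have mono : ∀ n (a b : ℝ), a ≤ b → μ.real {ω | b < |Z n ω|} ≤ μ.real {ω | a < |Z n ω|} := by
    intro n a b hab
    exact measureReal_mono (fun ω (hω : b < |Z n ω|) => lt_of_le_of_lt hab hω) (measure_ne_top _ _)
  have key := fun r => (clt_tail μ Z hZ hconv r).comp hN
  rw [tendsto_order]
  constructor
  · intro a ha
    have h1 : ∀ᶠ r in 𝓝 s, a < gtail r := (gtail_cont s).eventually (lt_mem_nhds ha)
    obtain ⟨r, hr, hra⟩ := ((h1.filter_mono nhdsWithin_le_nhds).and (self_mem_nhdsWithin (s := Set.Ioi s))).exists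
    filter_upwards [(key r).eventually (lt_mem_nhds hr), ht.eventually (gt_mem_nhds hra)] with i h2 h3
    exact h2.trans_le (mono _ _ _ h3.le)
  · intro a ha
    have h1 : ∀ᶠ r in 𝓝 s, gtail r < a := (gtail_cont s).eventually (gt_mem_nhds ha)
    obtain ⟨r, hr, hra⟩ := ((h1.filter_mono nhdsWithin_le_nhds).and (self_mem_nhdsWithin (s := Set.Iio s))).exists
    filter_upwards [(key r).eventually (gt_mem_nhds hr), ht.eventually (lt_mem_nhds hra)] with i h2 h3
    exact lt_of_le_of_lt (mono _ _ _ h3.le) h2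

end

lemma step_integral (a : ℕ → ℝ) (δ : ℝ) (hδ : 0 < δ)
    (hi : IntegrableOn (fun x : ℝ => a ⌊x / δ⌋₊) (Set.Ioi 0)) :
    ∫ x in Set.Ioi (0 : ℝ), a ⌊x / δ⌋₊ = δ * ∑' n, a n := by
  have hfl : ∀ (n : ℕ) (x : ℝ), x ∈ Set.Ico (n * δ) ((n + 1) * δ) → ⌊x / δ⌋₊ = n := by
    intro n x hx
    have h0 : (0 : ℝ) ≤ x := le_trans (by positivity) hx.1
    rw [Nat.floor_eq_iff (by positivity)]
    exact ⟨(le_div_iff₀ hδ).2 hx.1, (div_lt_iff₀ hδ).2 hx.2⟩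
  have hU : (⋃ n : ℕ, Set.Ico ((n : ℝ) * δ) ((n + 1) * δ)) = Set.Ici 0 := by
    ext x
    simp only [Set.mem_iUnion, Set.mem_Ici]
    constructor
    · rintro ⟨n, hn⟩; exact le_trans (by positivity) hn.1
    · intro hx
      refine ⟨⌊x / δ⌋₊, ?_, ?_⟩
      · exact (le_div_iff₀ hδ).1 (Nat.floor_le (by positivity))
      · exact (div_lt_iff₀ hδ).1 (Nat.lt_floor_add_one _)
  have hd : Pairwise (Function.onFun Disjoint fun n : ℕ => Set.Ico ((n : ℝ) * δ) ((n + 1) * δ)) := by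
    intro m n hmn
    refine Set.disjoint_left.2 fun x h1 h2 => hmn ?_
    rw [← hfl m x h1, hfl n x h2]
  have hi' : IntegrableOn (fun x : ℝ => a ⌊x / δ⌋₊) (⋃ n : ℕ, Set.Ico ((n : ℝ) * δ) ((n + 1) * δ)) := by
    rw [hU, integrableOn_Ici_iff_integrableOn_Ioi]; exact hi
  have hs := hasSum_integral_iUnion (fun n => measurableSet_Ico) hd hi'
  rw [hU, integral_Ici_eq_integral_Ioi] at hs
  have e : ∀ n : ℕ, ∫ x in Set.Ico ((n : ℝ) * δ) ((n + 1) * δ), a ⌊x / δ⌋₊ = δ * a n := by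
    intro n
    rw [setIntegral_congr_fun (g := fun _ => a n) measurableSet_Ico (fun x hx => by simp only [hfl n x hx])]
    rw [setIntegral_const, smul_eq_mul, Real.volume_real_Ico_of_le (by nlinarith)]
    ring
  simp_rw [e] at hs
  rw [← hs.tsum_eq, tsum_mul_left]

lemma floor_bounds (ε x : ℝ) (hε : 0 < ε) (hx : 0 < x) :
    x ≤ ε ^ 2 * ((⌊x / ε ^ 2⌋₊ : ℝ) + 1) ∧ ε ^ 2 * ((⌊x / ε ^ 2⌋₊ : ℝ) + 1) ≤ x + ε ^ 2 := by
  have h2 : 0 < ε ^ 2 := by positivity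
  have h3 := Nat.lt_floor_add_one (x / ε ^ 2)
  have h4 := Nat.floor_le (a := x / ε ^ 2) (by positivity)
  rw [div_lt_iff₀ h2] at h3
  rw [le_div_iff₀ h2] at h4
  constructor <;> nlinarith

lemma hermiteVariation_measurable {Ω : Type*} [MeasureSpace Ω] (q : ℕ) (H : ℝ)
    (B : ℝ → Ω → ℝ) (hB : IsFractionalBrownianMotion B H) (n : ℕ) :
    Measurable (hermiteVariation B H q n) := by
  unfold hermiteVariation
  refine Finset.measurable_sum _ fun k _ => ?_
  have h1 : Measurable fun x : ℝ => Polynomial.aeval x (Polynomial.hermite q) :=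
    (Polynomial.continuous_aeval _).measurable
  refine h1.comp ?_
  exact ((hB.measurable _).sub (hB.measurable _)).const_mul _

lemma min_bound (K a x : ℝ) (hK : 0 ≤ K) (hx : 0 < x) (h1 : a ≤ 1) (h2 : a ≤ K / x ^ 2) :
    a ≤ (1 + K) * (1 + x ^ 2)⁻¹ := by
  rw [le_div_iff₀ (by positivity)] at h2
  rw [← div_eq_mul_inv, le_div_iff₀ (by positivity)]
  linarith

theorem stmt_12 {Ω : Type*} [MeasureSpace Ω] [IsProbabilityMeasure (ℙ : Measure Ω)]
    (q : ℕ) (hq : 2 ≤ q) (H : ℝ) (hH0 : 0 < H) (hH1 : H < 1 - 1 / (2 * q))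
    (B : ℝ → Ω → ℝ) (hB : IsFractionalBrownianMotion B H)
    (c₁ : ℝ) (hc₁ : 0 < c₁)
    (hconv : TendstoInDistribution
      (fun n ω => hermiteVariation B H q n ω / (c₁ * Real.sqrt n)) (gaussianReal 0 1)) :
    Tendsto
      (fun ε : ℝ =>
        ε ^ 2 *
          ∑' n : ℕ,
            (ℙ {ω | ε * ((n : ℝ) + 1) < |hermiteVariation B H q (n + 1) ω|}).toReal)
      (𝓝[>] 0) (𝓝 (c₁ ^ 2)) := by
  obtain ⟨K, hK, hT⟩ := tail_bound q hq H hH0 hH1 B hB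
  let a : ℝ → ℕ → ℝ := fun ε n =>
    (ℙ {ω | ε * ((n : ℝ) + 1) < |hermiteVariation B H q (n + 1) ω|}).toReal
  let G : ℝ → ℝ → ℝ := fun ε x => a ε ⌊x / ε ^ 2⌋₊
  have hGm : ∀ ε, Measurable (G ε) := fun ε =>
    (measurable_from_nat (f := a ε)).comp (Nat.measurable_floor.comp (measurable_id.div_const _))
  have hGb : ∀ ε, 0 < ε → ∀ x, 0 < x → ‖G ε x‖ ≤ (1 + K) * (1 + x ^ 2)⁻¹ := by
    intro ε hε x hx
    have h0 : 0 ≤ G ε x := ENNReal.toReal_nonneg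
    rw [Real.norm_of_nonneg h0]
    refine min_bound K _ x hK hx ?_ ?_
    · exact measureReal_le_one
    · have h1 := hT (⌊x / ε ^ 2⌋₊ + 1) (by omega) ε hε
      push_cast at h1
      refine le_trans h1 ?_
      have h2 := (floor_bounds ε x hε hx).1
      gcongr
  have hbi : IntegrableOn (fun x : ℝ => (1 + K) * (1 + x ^ 2)⁻¹) (Set.Ioi 0) :=
    (integrable_inv_one_add_sq.const_mul _).integrableOn
  have hpt : ∀ x, 0 < x → Tendsto (fun ε => G ε x) (𝓝[>] 0) (𝓝 (gtail (√x / c₁))) := by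
    intro x hx
    let Z : ℕ → Ω → ℝ := fun n ω => hermiteVariation B H q n ω / (c₁ * Real.sqrt n)
    have hsq : Tendsto (fun ε : ℝ => ε ^ 2) (𝓝[>] 0) (𝓝[>] 0) := by
      refine tendsto_nhdsWithin_iff.2 ⟨?_, ?_⟩
      · have : Tendsto (fun ε : ℝ => ε ^ 2) (𝓝 0) (𝓝 (0 ^ 2)) := (continuous_pow 2).tendsto 0
        rw [zero_pow two_ne_zero] at this
        exact this.mono_left nhdsWithin_le_nhds
      · filter_upwards [self_mem_nhdsWithin] with ε hε
        exact pow_pos (show 0 < ε from hε) 2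
    have hN : Tendsto (fun ε : ℝ => ⌊x / ε ^ 2⌋₊ + 1) (𝓝[>] 0) atTop := by
      refine tendsto_atTop_mono (fun ε => Nat.le_succ _) ?_
      refine tendsto_nat_floor_atTop.comp ?_
      simp only [div_eq_mul_inv]
      exact (tendsto_inv_nhdsGT_zero.comp hsq).const_mul_atTop hx
    have ht0 : Tendsto (fun ε : ℝ => ε ^ 2 * ((⌊x / ε ^ 2⌋₊ : ℝ) + 1)) (𝓝[>] 0) (𝓝 x) := by
      have hu : Tendsto (fun ε : ℝ => x + ε ^ 2) (𝓝[>] 0) (𝓝 x) := by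
        simpa using (hsq.mono_right nhdsWithin_le_nhds).const_add x
      refine tendsto_of_tendsto_of_tendsto_of_le_of_le' tendsto_const_nhds hu ?_ ?_
      · filter_upwards [self_mem_nhdsWithin] with ε hε using (floor_bounds ε x hε hx).1
      · filter_upwards [self_mem_nhdsWithin] with ε hε using (floor_bounds ε x hε hx).2
    have ht : Tendsto (fun ε : ℝ => √(ε ^ 2 * ((⌊x / ε ^ 2⌋₊ : ℝ) + 1)) / c₁) (𝓝[>] 0)
        (𝓝 (√x / c₁)) := ht0.sqrt.div_const _
    have hm := clt_tail_moving (ℙ : Measure Ω) Z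
      (fun n => (hermiteVariation_measurable q H B hB n).div_const _) hconv _ _ hN _ _ ht
    refine hm.congr' ?_
    filter_upwards [self_mem_nhdsWithin] with ε hε
    have hε' : 0 < ε := hε
    change (ℙ _).toReal = (ℙ _).toReal
    congr 2
    ext ω
    simp only [Set.mem_setOf_eq, Z]
    push_cast
    set m : ℝ := (⌊x / ε ^ 2⌋₊ : ℝ) + 1 with hmdef
    have hm0 : 0 < m := by positivity
    have hs0 : 0 < √m := Real.sqrt_pos.2 hm0
    have e1 : √(ε ^ 2 * m) / c₁ = ε * m / (c₁ * √m) := by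
      rw [Real.sqrt_mul (by positivity), Real.sqrt_sq hε'.le, div_eq_div_iff hc₁.ne' (by positivity)]
      have := Real.mul_self_sqrt hm0.le
      linear_combination ε * c₁ * this
    rw [e1, abs_div, abs_of_pos (show 0 < c₁ * √m by positivity),
      div_lt_div_iff_of_pos_right (by positivity)]
  have hlim : Tendsto (fun ε => ∫ x in Set.Ioi (0 : ℝ), G ε x) (𝓝[>] 0) (𝓝 (c₁ ^ 2)) := by
    rw [← gtail_integral c₁ hc₁]
    refine tendsto_integral_filter_of_dominated_convergence
      (fun x : ℝ => (1 + K) * (1 + x ^ 2)⁻¹) ?_ ?_ hbi ?_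
    · exact Eventually.of_forall fun ε => (hGm ε).aestronglyMeasurable
    · filter_upwards [self_mem_nhdsWithin] with ε hε
      filter_upwards [ae_restrict_mem measurableSet_Ioi] with x hx using hGb ε hε x hx
    · filter_upwards [ae_restrict_mem measurableSet_Ioi] with x hx using hpt x hx
  refine hlim.congr' ?_
  filter_upwards [self_mem_nhdsWithin] with ε hε
  have hε' : 0 < ε := hε
  refine step_integral (a ε) (ε ^ 2) (by positivity) ?_
  refine Integrable.mono' hbi (hGm ε).aestronglyMeasurable ?_
  filter_upwards [ae_restrict_mem measurableSet_Ioi] with x hx using hGb ε hε x hx
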